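/- arXiv:2308.06322 — 2 statements merged into one kernel-verified Lean document; each statement's English description precedes it below -/
import Mathlib

section
/- Let Λ be a countable discrete abelian group and let X be a compact metrizable space with a continuous action of Λ by homeomorphisms. Suppose (X, Λ) is transitive (some point x_0 ∈ X has dense orbit) and topological Abramov of order at most k. Then there exist a polynomial map f : Λ → 𝕋^ℕ of degree at most k (where 𝕋 := ℝ/ℤ and 𝕋^ℕ carries the product topology) and a Λ-equivariant homeomorphism from X onto the orbit closure Y_f, where Y_f is the closure in (𝕋^ℕ)^Λ (product topology, shift action of Λ) of the shift orbit {f(·+z) : z ∈ Λ}. -/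
variable {Λ G Y X : Type*}

/-- Difference operator: `dd h f x = f (x+h) - f x`. -/
def dd [Add Λ] [Sub G] (h : Λ) (f : Λ → G) : Λ → G := fun x => f (x + h) - f x

/-- Iterated difference operator along a list of shifts. -/
def dds [Add Λ] [Sub G] (hs : List Λ) (f : Λ → G) : Λ → G := hs.foldr dd f

/-- `f` is a polynomial map of degree at most `k`. -/
def IsPolyDeg [Add Λ] [AddCommGroup G] (k : ℕ) (f : Λ → G) : Prop :=
  ∀ hs : List Λ, hs.length = k + 1 → ∀ x, dds hs f x = 0

/-- The shift orbit of `f : Λ → G` inside `G^Λ`. -/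
def orbit' [Add Λ] (f : Λ → G) : Set (Λ → G) := {g : Λ → G | ∃ z : Λ, g = fun x => f (x + z)}

/-- Multiplicative derivative `Δ_z φ (y) = φ (z·y) * conj (φ y)` for an action `T`. -/
def pd (T : Λ → Y → Y) (z : Λ) (φ : Y → ℂ) : Y → ℂ :=
  fun y => φ (T z y) * (starRingEnd ℂ) (φ y)

/-- Iterated multiplicative derivative. -/
def pds (T : Λ → Y → Y) (zs : List Λ) (φ : Y → ℂ) : Y → ℂ := zs.foldr (pd T) φ

/-- `φ` is a continuous phase polynomial of degree at most `k` for the action `T` on `Y`. -/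
def IsPhasePoly [TopologicalSpace Y] (T : Λ → Y → Y) (k : ℕ) (φ : Y → ℂ) : Prop :=
  Continuous φ ∧ ∀ zs : List Λ, zs.length = k + 1 → ∀ y, pds T zs φ y = 1

/-- The circle group `𝕋 = ℝ/ℤ`. -/
abbrev UnitTorus : Type := AddCircle (1 : ℝ)

/-!
A phase polynomial of degree at most `k` has modulus one, so it lifts through `ℝ/ℤ ≃ₜ Circle` to a
continuous map `X → 𝕋`, and multiplicative derivatives of the former become additive differences of
the latter along orbits. Density of the span forces the phase polynomials to separate points, and
separability of `C(X, ℂ)` extracts a sequence that still does; its lifts assemble to a continuous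
injection `θ : X → 𝕋^ℕ`. Recording `θ` along orbits embeds `X` equivariantly into `(𝕋^ℕ)^Λ`; by
compactness the image is closed, so it is the closure of the image of any dense orbit.
-/

open Function Set Topology

section Differences

theorem dds_cons_apply [Add Λ] [Sub G] (h : Λ) (hs : List Λ) (f : Λ → G) (x : Λ) :
    dds (h :: hs) f x = dds hs f (x + h) - dds hs f x :=
  rfl

theorem dds_apply_apply [Add Λ] {ι : Type*} {A : ι → Type*} [∀ i, Sub (A i)]
    (hs : List Λ) (f : Λ → ∀ i, A i) (x : Λ) (i : ι) :
    dds hs f x i = dds hs (fun w => f w i) x := by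
  induction hs generalizing x with
  | nil => rfl
  | cons h hs ih => rw [dds_cons_apply, dds_cons_apply, Pi.sub_apply, ih, ih]

theorem isPolyDeg_pi_iff [Add Λ] {ι : Type*} {A : ι → Type*} [∀ i, AddCommGroup (A i)]
    {k : ℕ} {f : Λ → ∀ i, A i} :
    IsPolyDeg k f ↔ ∀ i, IsPolyDeg k fun w => f w i := by
  simp only [IsPolyDeg, funext_iff, dds_apply_apply, Pi.zero_apply]
  exact ⟨fun h i hs hlen x => h hs hlen x i, fun h hs hlen x i => h i hs hlen x⟩

end Differences

section PhasePolynomials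

variable {T : Λ → Y → Y}

theorem pds_cons_apply (z : Λ) (zs : List Λ) (φ : Y → ℂ) (y : Y) :
    pds T (z :: zs) φ y = pds T zs φ (T z y) * starRingEnd ℂ (pds T zs φ y) :=
  rfl

theorem pds_one (zs : List Λ) : pds T zs 1 = 1 := by
  induction zs with
  | nil => rfl
  | cons z zs ih =>
    funext y
    simp only [pds_cons_apply, ih, Pi.one_apply, map_one, mul_one]

theorem isPhasePoly_one [TopologicalSpace Y] (k : ℕ) : IsPhasePoly T k 1 :=
  ⟨continuous_one, fun zs _ y => by rw [pds_one, Pi.one_apply]⟩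

theorem norm_pds_replicate_zero [Zero Λ] (hT0 : ∀ y, T 0 y = y) (φ : Y → ℂ) (m : ℕ) (y : Y) :
    ‖pds T (List.replicate m 0) φ y‖ = ‖φ y‖ ^ 2 ^ m := by
  induction m with
  | zero => rw [pow_zero, pow_one]; rfl
  | succ m ih =>
    rw [List.replicate_succ, pds_cons_apply, hT0, norm_mul, RCLike.norm_conj, ih, pow_succ 2 m,
      pow_mul, sq]

theorem IsPhasePoly.norm_eq_one [Zero Λ] [TopologicalSpace Y] {k : ℕ} {φ : Y → ℂ}
    (hφ : IsPhasePoly T k φ) (hT0 : ∀ y, T 0 y = y) (y : Y) : ‖φ y‖ = 1 := by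
  have hpow : ‖φ y‖ ^ 2 ^ (k + 1) = 1 := by
    rw [← norm_pds_replicate_zero hT0, hφ.2 _ List.length_replicate, norm_one]
  exact (pow_eq_one_iff_of_nonneg (norm_nonneg _) (by positivity)).1 hpow

end PhasePolynomials

section Itineraries

variable {A : Type*}

/-- The itinerary of `x` under the action `T`, read through the observable `θ`: the point of `A^Λ`
whose value at `w` is `θ (w · x)`. -/
def itinerary (T : Λ → X → X) (θ : X → A) (x : X) : Λ → A :=
  fun w => θ (T w x)

variable {T : Λ → X → X} {θ : X → A}

theorem continuous_itinerary [TopologicalSpace X] [TopologicalSpace A]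
    (hT : ∀ z, Continuous (T z)) (hθ : Continuous θ) : Continuous (itinerary T θ) :=
  continuous_pi fun w => hθ.comp (hT w)

theorem itinerary_injective [Zero Λ] (hT0 : ∀ x, T 0 x = x) (hθ : Injective θ) :
    Injective (itinerary T θ) := fun x y hxy => by
  have hzero : θ (T 0 x) = θ (T 0 y) := congrFun hxy 0
  rw [hT0, hT0] at hzero
  exact hθ hzero

theorem itinerary_act [Add Λ] (hTadd : ∀ z w x, T (z + w) x = T z (T w x)) (z : Λ) (x : X) :
    itinerary T θ (T z x) = fun w => itinerary T θ x (w + z) :=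
  funext fun w => congrArg θ (hTadd w z x).symm

theorem orbit'_itinerary [Add Λ] (hTadd : ∀ z w x, T (z + w) x = T z (T w x)) (x : X) :
    orbit' (itinerary T θ x) = itinerary T θ '' range fun z => T z x := by
  rw [← range_comp]
  ext g
  simp only [orbit', mem_ofPred_eq, mem_range, comp_apply, itinerary_act hTadd, eq_comm]

theorem exists_homeomorph_closure_orbit'_itinerary [AddMonoid Λ]
    [TopologicalSpace X] [CompactSpace X] [TopologicalSpace A] [T2Space A]
    (hTcont : ∀ z, Continuous (T z)) (hT0 : ∀ x, T 0 x = x)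
    (hTadd : ∀ z w x, T (z + w) x = T z (T w x)) (hθ : Continuous θ) (hθinj : Injective θ)
    {x₀ : X} (hx₀ : Dense (range fun z => T z x₀)) :
    ∃ e : X ≃ₜ closure (orbit' (itinerary T θ x₀)), ∀ x, (e x : Λ → A) = itinerary T θ x := by
  have hemb : IsClosedEmbedding (itinerary T θ) :=
    (continuous_itinerary hTcont hθ).isClosedEmbedding (itinerary_injective hT0 hθinj)
  have hrange : range (itinerary T θ) = closure (orbit' (itinerary T θ x₀)) := by
    rw [orbit'_itinerary hTadd, hemb.closure_image_eq, hx₀.closure_eq, image_univ]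
  exact ⟨hemb.isEmbedding.toHomeomorph.trans (Homeomorph.setCongr hrange), fun _ => rfl⟩

end Itineraries

section CircleLifts

variable {p : ℝ} {φ : X → ℂ}

theorem exists_continuous_toCircle_eq [TopologicalSpace X] (hp : p ≠ 0) (hφ : Continuous φ)
    (hnorm : ∀ x, ‖φ x‖ = 1) :
    ∃ θ : X → AddCircle p, Continuous θ ∧ ∀ x, ((θ x).toCircle : ℂ) = φ x := by
  let c : X → Circle := fun x => ⟨φ x, mem_sphere_zero_iff_norm.2 (hnorm x)⟩
  have hc : Continuous c := hφ.subtype_mk _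
  refine ⟨(AddCircle.homeomorphCircle hp).symm ∘ c,
    (AddCircle.homeomorphCircle hp).symm.continuous.comp hc, fun x => ?_⟩
  rw [← AddCircle.homeomorphCircle_apply hp, comp_apply, Homeomorph.apply_symm_apply]

variable [AddCommMagma Λ] {T : Λ → X → X} {θ : X → AddCircle p}

theorem toCircle_dds_itinerary (hTadd : ∀ z w x, T (z + w) x = T z (T w x))
    (hθ : ∀ x, ((θ x).toCircle : ℂ) = φ x) (x : X) (hs : List Λ) (w : Λ) :
    ((dds hs (itinerary T θ x) w).toCircle : ℂ) = pds T hs φ (T w x) := by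
  induction hs generalizing w with
  | nil => exact hθ _
  | cons h hs ih =>
    rw [dds_cons_apply, pds_cons_apply, sub_eq_add_neg, AddCircle.toCircle_add,
      AddCircle.toCircle_neg, Circle.coe_mul, Circle.coe_inv_eq_conj, ih, ih, add_comm w h, hTadd]

theorem IsPhasePoly.isPolyDeg_itinerary [TopologicalSpace X] {k : ℕ} (hφ : IsPhasePoly T k φ)
    (hp : p ≠ 0) (hTadd : ∀ z w x, T (z + w) x = T z (T w x))
    (hθ : ∀ x, ((θ x).toCircle : ℂ) = φ x) (x : X) : IsPolyDeg k (itinerary T θ x) := by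
  intro hs hlen w
  apply AddCircle.injective_toCircle hp
  apply Circle.ext
  rw [toCircle_dds_itinerary hTadd hθ, hφ.2 hs hlen, AddCircle.toCircle_zero, Circle.coe_one]

end CircleLifts

section PointSeparation

variable [TopologicalSpace X]

theorem dense_of_forall_exists_norm_sub_lt [CompactSpace X] {E : Type*}
    [SeminormedAddCommGroup E] {S : Set C(X, E)}
    (hS : ∀ (h : C(X, E)) (ε : ℝ), 0 < ε → ∃ g ∈ S, ∀ x, ‖h x - g x‖ < ε) : Dense S := by
  refine Metric.dense_iff.2 fun h ε hε => ?_
  obtain ⟨g, hgS, hg⟩ := hS h ε hε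
  refine ⟨g, ?_, hgS⟩
  rw [Metric.mem_ball', ContinuousMap.dist_lt_iff hε]
  exact fun x => (dist_eq_norm _ _).trans_lt (hg x)

theorem injective_eval_of_dense_span {𝕜 : Type*} [RCLike 𝕜] [T35Space X] {S : Set C(X, 𝕜)}
    (hS : Dense (Submodule.span 𝕜 S : Set C(X, 𝕜))) :
    Injective fun (x : X) (ψ : S) => ψ.1 x := by
  intro x y hxy
  have heval : ContinuousMap.evalCLM 𝕜 x = (ContinuousMap.evalCLM 𝕜 y : C(X, 𝕜) →L[𝕜] 𝕜) :=
    ContinuousLinearMap.ext_on hS fun ψ hψ => congrFun hxy ⟨ψ, hψ⟩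
  by_contra hne
  obtain ⟨g, hg, hgxy⟩ := separatesPoints_continuous_of_t35Space hne
  let gc : C(X, 𝕜) := ⟨fun z => (g z : 𝕜), RCLike.continuous_ofReal.comp hg⟩
  exact hgxy (RCLike.ofReal_injective (DFunLike.congr_fun heval gc))

theorem exists_seq_injective_eval [LocallyCompactSpace X] [SecondCountableTopology X]
    {E : Type*} [TopologicalSpace E] [SecondCountableTopology E] [T2Space E] {S : Set C(X, E)}
    (hne : S.Nonempty) (hS : Injective fun (x : X) (ψ : S) => ψ.1 x) :
    ∃ u : ℕ → S, Injective fun (x : X) (n : ℕ) => (u n).1 x := by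
  have : Nonempty S := hne.to_subtype
  obtain ⟨u, hu⟩ := TopologicalSpace.exists_dense_seq S
  have heval (x : X) : Continuous fun ψ : S => ψ.1 x :=
    (continuous_eval_const x).comp continuous_subtype_val
  exact ⟨u, fun x y hxy => hS (hu.equalizer (heval x) (heval y) hxy)⟩

end PointSeparation

section Abramov

variable [AddCommMonoid Λ] [TopologicalSpace X] [CompactSpace X]
  [TopologicalSpace.MetrizableSpace X] {T : Λ → X → X} {k : ℕ}

theorem exists_injective_isPolyDeg_itinerary
    (hT0 : ∀ x, T 0 x = x) (hTadd : ∀ z w x, T (z + w) x = T z (T w x))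
    (habramov : Dense (Submodule.span ℂ {ψ : C(X, ℂ) | IsPhasePoly T k ⇑ψ} : Set C(X, ℂ))) :
    ∃ θ : X → ℕ → UnitTorus, Continuous θ ∧ Injective θ ∧
      ∀ x, IsPolyDeg k (itinerary T θ x) := by
  obtain ⟨u, hu⟩ := exists_seq_injective_eval ⟨1, isPhasePoly_one k⟩
    (injective_eval_of_dense_span habramov)
  choose θ hθcont hθ using fun n =>
    exists_continuous_toCircle_eq one_ne_zero (u n).2.1 ((u n).2.norm_eq_one hT0)
  refine ⟨fun x n => θ n x, continuous_pi hθcont, fun x y hxy => hu ?_, fun x => ?_⟩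
  · funext n
    have hxyn : θ n x = θ n y := congrFun hxy n
    simp only [← hθ, hxyn]
  · exact isPolyDeg_pi_iff.2 fun n =>
      (u n).2.isPolyDeg_itinerary one_ne_zero hTadd (hθ n) x

theorem transitive_topAbramov_conjugate_orbitClosure_general
    (hTcont : ∀ z, Continuous (T z)) (hT0 : ∀ x, T 0 x = x)
    (hTadd : ∀ z w x, T (z + w) x = T z (T w x))
    (htrans : ∃ x₀, Dense (range fun z => T z x₀))
    (habramov : Dense (Submodule.span ℂ {ψ : C(X, ℂ) | IsPhasePoly T k ⇑ψ} : Set C(X, ℂ))) :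
    ∃ f : Λ → ℕ → UnitTorus, IsPolyDeg k f ∧
      ∃ e : X ≃ₜ closure (orbit' f), ∀ z x,
        (e (T z x) : Λ → ℕ → UnitTorus) = fun w => (e x : Λ → ℕ → UnitTorus) (w + z) := by
  obtain ⟨x₀, hx₀⟩ := htrans
  obtain ⟨θ, hθcont, hθinj, hθpoly⟩ := exists_injective_isPolyDeg_itinerary hT0 hTadd habramov
  obtain ⟨e, he⟩ :=
    exists_homeomorph_closure_orbit'_itinerary hTcont hT0 hTadd hθcont hθinj hx₀
  refine ⟨itinerary T θ x₀, hθpoly x₀, e, fun z x => ?_⟩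
  rw [he, he, itinerary_act hTadd]

end Abramov

/-- every transitive topological Abramov system `(X, Λ)` of order at most `k`
(with `X` compact metrizable, `Λ` countable discrete abelian acting by homeomorphisms) is
conjugate to the orbit closure, under the shift action, of a polynomial map
`f : Λ → 𝕋^ℕ` of degree at most `k`, via a `Λ`-equivariant homeomorphism. -/
theorem transitive_topAbramov_conjugate_orbitClosure (k : ℕ)
    [AddCommGroup Λ] [Countable Λ]
    [TopologicalSpace X] [CompactSpace X] [TopologicalSpace.MetrizableSpace X]
    (T : Λ → X → X)
    (hTcont : ∀ z : Λ, Continuous (T z))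
    (hT0 : ∀ x : X, T 0 x = x)
    (hTadd : ∀ (z w : Λ) (x : X), T (z + w) x = T z (T w x))
    (htrans : ∃ x₀ : X, Dense (Set.range fun z : Λ => T z x₀))
    (habramov : ∀ (h : C(X, ℂ)) (ε : ℝ), 0 < ε →
      ∃ g ∈ Submodule.span ℂ {ψ : C(X, ℂ) | IsPhasePoly T k ⇑ψ},
        ∀ y, ‖h y - g y‖ < ε) :
    ∃ f : Λ → (ℕ → UnitTorus), IsPolyDeg k f ∧
      ∃ e : X ≃ₜ (closure (orbit' f) : Set (Λ → ℕ → UnitTorus)),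
        ∀ (z : Λ) (x : X),
          ((e (T z x) : Λ → ℕ → UnitTorus)) = fun w => (e x : Λ → ℕ → UnitTorus) (w + z) := by
  exact transitive_topAbramov_conjugate_orbitClosure_general hTcont hT0 hTadd htrans
    (dense_of_forall_exists_norm_sub_lt habramov)
end

section
/- Fix a prime p and an integer k ≥ 1, and let Λ := 𝔽_p^ω = ⊕_{n∈ℕ} ℤ/pℤ. Let φ : Λ → ℝ/ℤ be a polynomial map of degree at most k. Then for every x ∈ Λ, the element φ(x) − φ(0) of ℝ/ℤ is annihilated by p^{⌊(k−1)/(p−1)⌋+1}, i.e. p^{⌊(k−1)/(p−1)⌋+1}·(φ(x) − φ(0)) = 0 in ℝ/ℤ. -/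
variable {Λ G : Type*}

/-!
Fix `x` with `p • x = 0` and let `D` be the difference operator in direction `x`. The shift `1 + D`
satisfies `(1 + D) ^ p = 1`, while `D` is nilpotent on the `ℤ[D]`-module generated by `φ`, since
`D ^ (k + 1)` kills `φ`. Expanding the `p`-th power gives `0 = p * D * (1 + D * v) + D ^ p`, where
`1 + D * v` is invertible on that module. So each factor of `p` trades one power of `D` for `p`
powers of it: `p ^ m * D` is a multiple of `D ^ ((p - 1) * m + 1)`, which kills `φ` once
`k ≤ (p - 1) * m`.
-/

section CommutativeAlgebra

variable {R : Type*} {p : ℕ}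

theorem exists_one_add_pow_prime_eq [CommSemiring R] (hp : p.Prime) (a : R) :
    ∃ v, (1 + a) ^ p = 1 + p * a * (1 + a * v) + a ^ p := by
  let c (i : ℕ) : R := (p.choose i / p : ℕ)
  have hc_one : c 1 = 1 := by simp [c, Nat.div_self hp.pos]
  have sum_eq : ∑ i ∈ Finset.Ioo 0 p, a ^ (i - 1) * c i
      = 1 + a * ∑ i ∈ Finset.Ico 2 p, a ^ (i - 2) * c i := by
    rw [show Finset.Ioo 0 p = Finset.Ico 1 p from rfl, Finset.sum_eq_sum_Ico_succ_bot hp.one_lt,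
      Finset.mul_sum]
    congr 1
    · simp [hc_one]
    · refine Finset.sum_congr rfl fun i hi ↦ ?_
      have hi_two : 2 ≤ i := (Finset.mem_Ico.mp hi).1
      rw [← mul_assoc, ← pow_succ', show i - 2 + 1 = i - 1 by omega]
  refine ⟨∑ i ∈ Finset.Ico 2 p, a ^ (i - 2) * c i, ?_⟩
  rw [← sum_eq, add_comm 1 a, add_pow_prime_eq hp]
  simp only [one_pow, mul_one, c]
  ring

theorem pow_prime_dvd_natCast_mul [CommRing R] (hp : p.Prime) {a : R} (ha : IsNilpotent a)
    (hpow : (1 + a) ^ p = 1) : a ^ p ∣ p * a := by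
  obtain ⟨v, hv⟩ := exists_one_add_pow_prime_eq hp a
  have hunit : IsUnit (1 + a * v) := ((Commute.all a v).isNilpotent_mul_right ha).isUnit_one_add
  rw [← hunit.dvd_mul_right]
  exact ⟨-1, by linear_combination hpow - hv⟩

theorem pow_mul_add_one_dvd_pow_mul [CommMonoid R] {a c : R} {n : ℕ}
    (h : a ^ (n + 1) ∣ c * a) (m : ℕ) : a ^ (n * m + 1) ∣ c ^ m * a := by
  induction m with
  | zero => simp
  | succ m ih =>
    calc a ^ (n * (m + 1) + 1) = a ^ (n * m) * a ^ (n + 1) := by rw [← pow_add]; congr 1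
      _ ∣ a ^ (n * m) * (c * a) := mul_dvd_mul_left _ h
      _ = c * a ^ (n * m + 1) := by rw [pow_succ, mul_left_comm]
      _ ∣ c * (c ^ m * a) := mul_dvd_mul_left _ ih
      _ = c ^ (m + 1) * a := by rw [pow_succ', mul_assoc]

theorem natCast_prime_pow_mul_eq_zero [CommRing R] (hp : p.Prime) {k m : ℕ}
    (hkm : k ≤ (p - 1) * m) {a : R} (hpow : (1 + a) ^ p = 1) (ha : a ^ (k + 1) = 0) :
    (p : R) ^ m * a = 0 := by
  have hdvd : a ^ (p - 1 + 1) ∣ p * a := by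
    rw [Nat.sub_add_cancel hp.one_le]
    exact pow_prime_dvd_natCast_mul hp ⟨k + 1, ha⟩ hpow
  have hzero : a ^ ((p - 1) * m + 1) = 0 := pow_eq_zero_of_le (by omega) ha
  exact zero_dvd_iff.mp (hzero ▸ pow_mul_add_one_dvd_pow_mul hdvd m)

variable {M : Type*} [CommRing R] [AddCommGroup M] [Module R M]

theorem natCast_prime_pow_mul_smul_eq_zero (hp : p.Prime) {k m : ℕ} (hkm : k ≤ (p - 1) * m)
    {a : R} {f : M} (hpow : (1 + a) ^ p • f = f) (ha : a ^ (k + 1) • f = 0) :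
    ((p : R) ^ m * a) • f = 0 := by
  let π := Ideal.Quotient.mk (Ideal.torsionOf R M f)
  have π_eq_zero_iff (r : R) : π r = 0 ↔ r • f = 0 := by
    rw [Ideal.Quotient.eq_zero_iff_mem, Ideal.mem_torsionOf_iff]
  have hπpow : (1 + π a) ^ p = 1 := by
    have h := (π_eq_zero_iff ((1 + a) ^ p - 1)).mpr (by rw [sub_smul, hpow, one_smul, sub_self])
    simpa [sub_eq_zero] using h
  have hπa : π a ^ (k + 1) = 0 := by rw [← map_pow, π_eq_zero_iff, ha]
  rw [← π_eq_zero_iff]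
  simpa using natCast_prime_pow_mul_eq_zero hp hkm hπpow hπa

open Polynomial Module in
theorem prime_pow_nsmul_end_apply_eq_zero (hp : p.Prime) {k m : ℕ} (hkm : k ≤ (p - 1) * m)
    {D : Module.End R M} {f : M} (hpow : ((1 + D) ^ p) f = f) (hD : (D ^ (k + 1)) f = 0) :
    p ^ m • D f = 0 := by
  have of_aeval (q : R[X]) : q • AEval'.of D f = AEval'.of D (aeval D q f) := rfl
  have h := natCast_prime_pow_mul_smul_eq_zero hp hkm (a := (X : R[X])) (f := AEval'.of D f)
    (by simp [of_aeval, hpow]) (by simp [of_aeval, hD])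
  rw [of_aeval, LinearEquiv.map_eq_zero_iff, ← Nat.cast_pow, ← nsmul_eq_mul, map_nsmul,
    aeval_X] at h
  exact h

end CommutativeAlgebra

theorem dds_replicate [AddCommMonoid Λ] [AddCommGroup G] (n : ℕ) (h : Λ) (f : Λ → G) :
    dds (List.replicate n h) f = (fwdDiff h)^[n] f := by
  induction n with
  | zero => rfl
  | succ n ih =>
    rw [Function.iterate_succ_apply', ← ih]
    rfl

open fwdDiff_aux in
theorem poly_torus_values_torsion_general [AddCommMonoid Λ] [AddCommGroup G] {p k m : ℕ}
    (hp : p.Prime) (hkm : k ≤ (p - 1) * m) {f : Λ → G} (hf : IsPolyDeg k f) {x : Λ}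
    (hx : p • x = 0) (y : Λ) : p ^ m • (f (y + x) - f y) = 0 := by
  have shift_pow : ((1 + fwdDiffₗ Λ G x) ^ p) f = f := by
    ext z
    rw [add_comm, ← shiftₗ, shiftₗ_pow_apply, hx, add_zero]
  have diff_pow : (fwdDiffₗ Λ G x ^ (k + 1)) f = 0 := by
    rw [coe_fwdDiffₗ_pow, ← dds_replicate]
    exact funext (hf _ List.length_replicate)
  exact congrFun (prime_pow_nsmul_end_apply_eq_zero hp hkm shift_pow diff_pow) y

/-- if `φ : 𝔽_p^ω → ℝ/ℤ` is a polynomial map of degree at most `k`, then for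
every `x` the element `φ x − φ 0` is annihilated by `p^{⌊(k−1)/(p−1)⌋+1}`. -/
theorem poly_torus_values_torsion (p k : ℕ) (hp : p.Prime) (hk : 1 ≤ k)
    (φ : (ℕ →₀ ZMod p) → AddCircle (1 : ℝ)) (hφ : IsPolyDeg k φ) :
    ∀ x : ℕ →₀ ZMod p, (p ^ ((k - 1) / (p - 1) + 1) : ℕ) • (φ x - φ 0) = 0 := by
  have hkm := Nat.le_of_pred_lt (Nat.lt_mul_div_succ (k - 1) (Nat.sub_pos_of_lt hp.one_lt))
  intro x
  simpa using poly_torus_values_torsion_general hp hkm hφ (ZModModule.char_nsmul_eq_zero p x) 0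
end
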